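/- Let n ≥ 1 and let ψ : ℝⁿ → ℝ be a smooth function such that ψ, ψ² and |∇ψ|² are integrable with respect to the standard Gaussian probability measure γₙ on ℝⁿ. Then ∫ |∇ψ|² dγₙ ≥ ∫ ψ² dγₙ − ( ∫ ψ dγₙ )². -/

import Mathlib

open MeasureTheory

noncomputable section

/-- The standard Gaussian probability measure on `ℝⁿ`, with density
`(2π)^{-n/2} e^{-|x|²/2}` with respect to Lebesgue measure. -/
def stdGaussian (n : ℕ) : Measure (EuclideanSpace ℝ (Fin n)) :=
  volume.withDensity fun x =>
    ENNReal.ofReal ((2 * Real.pi) ^ (-(n : ℝ) / 2) * Real.exp (-‖x‖ ^ 2 / 2))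

/-!
Duplicating the variable, `2 Var f(X) = 𝔼 |f X - f X'|²`. For a probability measure on the line,
Cauchy–Schwarz gives `|f y - f x|² ≤ (y - x) ∫ₓʸ f'²`, and exchanging the integrals yields
`Var f ≤ ∫ f'(t)² w(t) dt` with the weight `w(t) = ∫_{y ≥ t} (y - m) dμ`, where `m` is the mean
of `μ`. The Gaussian density is characterised by `w` being the variance times that density, which
is the Poincaré inequality in dimension one. The Efron–Stein inequality, which bounds the variance
under a product measure by the sum of the averaged coordinatewise variances, transfers it to `ℝⁿ`.

Working with `ℝ≥0∞`-valued variances makes every inequality meaningful without integrability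
assumptions; square integrability of `ψ` is then a consequence.
-/

section GaussianPoincare

open ProbabilityTheory hiding stdGaussian
open Filter Function Set
open scoped ENNReal NNReal Topology

section Variance

variable {α β : Type*} [MeasurableSpace α] [MeasurableSpace β]

theorem eLpNorm_two_sq {E : Type*} [NormedAddCommGroup E] (f : α → E) (μ : Measure α) :
    eLpNorm f 2 μ ^ 2 = ∫⁻ x, ‖f x‖ₑ ^ 2 ∂μ := by
  simpa using eLpNorm_nnreal_pow_eq_lintegral (f := f) (μ := μ) (p := 2) two_ne_zero

theorem memLp_two_iff_lintegral_enorm_sq_ne_top {E : Type*} [NormedAddCommGroup E] {μ : Measure α}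
    {f : α → E} (hf : AEStronglyMeasurable f μ) :
    MemLp f 2 μ ↔ ∫⁻ x, ‖f x‖ₑ ^ 2 ∂μ ≠ ∞ := by
  simp [MemLp, hf, ← eLpNorm_two_sq, lt_top_iff_ne_top]

theorem enorm_integral_sq_le {E : Type*} [NormedAddCommGroup E] [NormedSpace ℝ E] {μ : Measure α}
    {f : α → E} (hf : AEStronglyMeasurable f μ) :
    ‖∫ x, f x ∂μ‖ₑ ^ 2 ≤ μ univ * ∫⁻ x, ‖f x‖ₑ ^ 2 ∂μ := by
  have hle : ‖∫ x, f x ∂μ‖ₑ ≤ eLpNorm f 2 μ * μ univ ^ (1 / 2 : ℝ) := by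
    calc ‖∫ x, f x ∂μ‖ₑ ≤ eLpNorm f 1 μ := by
          simpa only [eLpNorm_one_eq_lintegral_enorm] using enorm_integral_le_lintegral_enorm f
      _ ≤ eLpNorm f 2 μ * μ univ ^ (1 / 2 : ℝ) := by
          simpa [← one_div, show (1 - 1 / 2 : ℝ) = 1 / 2 by norm_num] using
            eLpNorm_le_eLpNorm_mul_rpow_measure_univ one_le_two hf
  calc ‖∫ x, f x ∂μ‖ₑ ^ 2 ≤ (eLpNorm f 2 μ * μ univ ^ (1 / 2 : ℝ)) ^ 2 := by gcongr
    _ = μ univ * ∫⁻ x, ‖f x‖ₑ ^ 2 ∂μ := by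
      rw [mul_pow, eLpNorm_two_sq, ← ENNReal.rpow_mul_natCast, mul_comm]
      norm_num

theorem lintegral_enorm_sub_const_sq {μ : Measure α} [IsProbabilityMeasure μ] {X : α → ℝ}
    (hX : AEStronglyMeasurable X μ) (c : ℝ) :
    ∫⁻ x, ‖X x - c‖ₑ ^ 2 ∂μ = eVar[X; μ] + ‖μ[X] - c‖ₑ ^ 2 := by
  have hXc : AEStronglyMeasurable (fun x ↦ X x - c) μ := hX.sub aestronglyMeasurable_const
  by_cases hL : MemLp X 2 μ
  · have hint : Integrable X μ := hL.integrable one_le_two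
    have hmean : ∫ x, (X x - c) ∂μ = μ[X] - c := by
      simp [integral_sub hint (integrable_const c)]
    have heVar : eVar[fun x ↦ X x - c; μ] = eVar[X; μ] := by
      simp [evariance, hmean]
    have hJensen := enorm_integral_sq_le hXc
    rw [← heVar, evariance_def' hXc, ← Real.enorm_of_nonneg (sq_nonneg _), enorm_pow, ← hmean,
      tsub_add_cancel_of_le (by simpa using hJensen)]
  · have hLc : ¬ MemLp (fun x ↦ X x - c) 2 μ := fun h ↦ hL <| by
      simpa [Pi.add_def] using h.add (memLp_const c)
    rw [evariance_eq_top hX hL, top_add]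
    exact not_ne_iff.1 (mt (memLp_two_iff_lintegral_enorm_sq_ne_top hXc).2 hLc)

theorem evariance_le_lintegral_enorm_sub_const_sq {μ : Measure α} [IsProbabilityMeasure μ]
    {X : α → ℝ} (hX : AEStronglyMeasurable X μ) (c : ℝ) :
    eVar[X; μ] ≤ ∫⁻ x, ‖X x - c‖ₑ ^ 2 ∂μ :=
  (lintegral_enorm_sub_const_sq hX c).symm ▸ le_self_add

theorem lintegral_prod_enorm_sub_sq {μ : Measure α} [IsProbabilityMeasure μ] {X : α → ℝ}
    (hX : Measurable X) :
    ∫⁻ p, ‖X p.1 - X p.2‖ₑ ^ 2 ∂μ.prod μ = 2 * eVar[X; μ] := by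
  have hXc (c : ℝ) := lintegral_enorm_sub_const_sq (μ := μ) hX.aestronglyMeasurable c
  rw [lintegral_prod_symm _ (by fun_prop)]
  simp_rw [hXc]
  rw [lintegral_add_left measurable_const]
  simp_rw [enorm_sub_rev (μ[X])]
  simp [two_mul, evariance]

theorem evariance_comp_of_measurePreserving {μ : Measure α} {ν : Measure β} {g : α → β}
    (hg : MeasurePreserving g μ ν) {X : β → ℝ} (hX : Measurable X) :
    eVar[fun x ↦ X (g x); μ] = eVar[X; ν] := by
  have hmean : ∫ x, X (g x) ∂μ = ν[X] := by
    rw [← hg.map_eq, integral_map hg.aemeasurable hX.aestronglyMeasurable]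
  simp only [evariance, hmean]
  exact hg.lintegral_comp (f := fun y ↦ ‖X y - ν[X]‖ₑ ^ 2) (by fun_prop)

theorem measurable_evariance_prodMk_left {ν : Measure β} [SFinite ν] {f : α × β → ℝ}
    (hf : Measurable f) : Measurable fun x ↦ eVar[fun y ↦ f (x, y); ν] := by
  have hmean : Measurable fun x ↦ ∫ y, f (x, y) ∂ν :=
    (hf.stronglyMeasurable.integral_prod_right' (ν := ν)).measurable
  have hmean_fst : Measurable fun p : α × β ↦ ∫ y, f (p.1, y) ∂ν := hmean.comp measurable_fst
  exact Measurable.lintegral_prod_right'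
    (f := fun p : α × β ↦ ‖f p - ∫ y, f (p.1, y) ∂ν‖ₑ ^ 2) (by fun_prop)

theorem evariance_prod_le {μ : Measure α} {ν : Measure β} [IsProbabilityMeasure μ]
    [IsProbabilityMeasure ν] {f : α × β → ℝ} (hf : Measurable f) :
    eVar[f; μ.prod ν] ≤
      ∫⁻ y, eVar[fun x ↦ f (x, y); μ] ∂ν + ∫⁻ x, eVar[fun y ↦ f (x, y); ν] ∂μ := by
  set h : β → ℝ := fun y ↦ ∫ x, f (x, y) ∂μ
  have hh_meas : Measurable h := (hf.stronglyMeasurable.integral_prod_left').measurable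
  have hVar_meas := measurable_evariance_prodMk_left (ν := ν) hf
  have hswap : ∫⁻ x, ∫⁻ y, ‖f (x, y) - h y‖ₑ ^ 2 ∂ν ∂μ = ∫⁻ y, eVar[fun x ↦ f (x, y); μ] ∂ν :=
    lintegral_lintegral_swap (by fun_prop)
  rcases eq_or_ne (∫⁻ x, eVar[fun y ↦ f (x, y); ν] ∂μ) ∞ with htop | hleft
  · simp [htop]
  rcases eq_or_ne (∫⁻ y, eVar[fun x ↦ f (x, y); μ] ∂ν) ∞ with htop | hright
  · simp [htop]
  have hf_memLp : ∀ᵐ x ∂μ, MemLp (fun y ↦ f (x, y)) 2 ν := by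
    filter_upwards [ae_lt_top hVar_meas hleft] with x hx
    exact (evariance_lt_top_iff_memLp (hf.comp measurable_prodMk_left).aestronglyMeasurable).1 hx
  have hsub_memLp : ∀ᵐ x ∂μ, MemLp (fun y ↦ f (x, y) - h y) 2 ν := by
    filter_upwards [ae_lt_top (by fun_prop) (hswap.trans_ne hright)] with x hx
    exact (memLp_two_iff_lintegral_enorm_sq_ne_top (by fun_prop)).2 hx.ne
  have hh_int : Integrable h ν := by
    obtain ⟨x, hx, hx'⟩ := (hf_memLp.and hsub_memLp).exists
    simpa [Pi.sub_def] using (hx.sub hx').integrable one_le_two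
  -- Jensen in `y`, applied to `f (x, y) - h y`, controls the spread of the means of `f (x, ·)`.
  have hmean : ∀ᵐ x ∂μ, ‖∫ y, f (x, y) ∂ν - ∫ y, h y ∂ν‖ₑ ^ 2 ≤ ∫⁻ y, ‖f (x, y) - h y‖ₑ ^ 2 ∂ν := by
    filter_upwards [hf_memLp] with x hx
    rw [← integral_sub (hx.integrable one_le_two) hh_int]
    simpa using enorm_integral_sq_le (μ := ν) (f := fun y ↦ f (x, y) - h y) (by fun_prop)
  calc eVar[f; μ.prod ν] ≤ ∫⁻ p, ‖f p - ∫ y, h y ∂ν‖ₑ ^ 2 ∂μ.prod ν :=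
        evariance_le_lintegral_enorm_sub_const_sq hf.aestronglyMeasurable _
    _ = ∫⁻ x, (eVar[fun y ↦ f (x, y); ν] + ‖∫ y, f (x, y) ∂ν - ∫ y, h y ∂ν‖ₑ ^ 2) ∂μ := by
        rw [lintegral_prod _ (by fun_prop)]
        exact lintegral_congr fun x ↦ lintegral_enorm_sub_const_sq
            (hf.comp measurable_prodMk_left).aestronglyMeasurable _
    _ ≤ ∫⁻ x, (eVar[fun y ↦ f (x, y); ν] + ∫⁻ y, ‖f (x, y) - h y‖ₑ ^ 2 ∂ν) ∂μ :=
        lintegral_mono_ae (hmean.mono fun x hx ↦ by gcongr)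
    _ = _ := by rw [lintegral_add_left hVar_meas, hswap, add_comm]

end Variance

section Product

theorem measurePreserving_finCons {n : ℕ} {α : Fin (n + 1) → Type*} [∀ i, MeasurableSpace (α i)]
    (μ : ∀ i, Measure (α i)) [∀ i, SigmaFinite (μ i)] :
    MeasurePreserving (fun p : α 0 × (∀ j : Fin n, α j.succ) ↦ (Fin.cons p.1 p.2 : ∀ i, α i))
      ((μ 0).prod (Measure.pi fun j : Fin n ↦ μ j.succ)) (Measure.pi μ) := by
  have hmeas : Measurable fun p : α 0 × (∀ j : Fin n, α j.succ) ↦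
      (Fin.cons p.1 p.2 : ∀ i, α i) :=
    measurable_pi_iff.2 <| Fin.forall_fin_succ.2 ⟨measurable_fst, fun j ↦
      (measurable_pi_apply j).comp measurable_snd⟩
  refine ⟨hmeas, (Measure.pi_eq fun s hs ↦ ?_).symm⟩
  have hpre : (fun p : α 0 × (∀ j : Fin n, α j.succ) ↦ (Fin.cons p.1 p.2 : ∀ i, α i)) ⁻¹'
      univ.pi s = s 0 ×ˢ univ.pi fun j : Fin n ↦ s j.succ := by
    ext p
    simp [Fin.forall_fin_succ]
  rw [Measure.map_apply hmeas (MeasurableSet.univ_pi hs), hpre, Measure.prod_prod, Measure.pi_pi,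
    Fin.prod_univ_succ]

theorem lintegral_pi_finSucc {n : ℕ} {α : Fin (n + 1) → Type*} [∀ i, MeasurableSpace (α i)]
    (μ : ∀ i, Measure (α i)) [∀ i, SigmaFinite (μ i)] {f : (∀ i, α i) → ℝ≥0∞}
    (hf : Measurable f) :
    ∫⁻ x, f x ∂Measure.pi μ =
      ∫⁻ t, ∫⁻ y, f (Fin.cons t y) ∂(Measure.pi fun j : Fin n ↦ μ j.succ) ∂μ 0 := by
  have hcons := measurePreserving_finCons μ
  rw [← hcons.lintegral_comp hf]
  exact lintegral_prod _ (hf.comp hcons.measurable).aemeasurable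

theorem lintegral_pi_prod {n : ℕ} {α : Fin n → Type*} [∀ i, MeasurableSpace (α i)]
    (μ : ∀ i, Measure (α i)) [∀ i, SigmaFinite (μ i)] {f : ∀ i, α i → ℝ≥0∞}
    (hf : ∀ i, Measurable (f i)) :
    ∫⁻ x, ∏ i, f i (x i) ∂Measure.pi μ = ∏ i, ∫⁻ t, f i t ∂μ i := by
  induction n with
  | zero => simp
  | succ n ih =>
    rw [lintegral_pi_finSucc μ (by fun_prop), Fin.prod_univ_succ, ← ih _ fun i ↦ hf i.succ,
      ← lintegral_mul_const _ (hf 0)]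
    simp only [Fin.prod_univ_succ, Fin.cons_zero, Fin.cons_succ]
    exact lintegral_congr fun t ↦ lintegral_const_mul _ (by fun_prop)

theorem pi_withDensity {n : ℕ} {α : Fin n → Type*} [∀ i, MeasurableSpace (α i)]
    (μ : ∀ i, Measure (α i)) [∀ i, SigmaFinite (μ i)] {f : ∀ i, α i → ℝ≥0∞}
    (hf : ∀ i, Measurable (f i)) [∀ i, SigmaFinite ((μ i).withDensity (f i))] :
    Measure.pi (fun i ↦ (μ i).withDensity (f i)) =
      (Measure.pi μ).withDensity fun x ↦ ∏ i, f i (x i) := by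
  refine Measure.pi_eq fun s hs ↦ ?_
  rw [withDensity_apply _ (MeasurableSet.univ_pi hs), Measure.restrict_pi_pi,
    lintegral_pi_prod _ hf]
  exact Finset.prod_congr rfl fun i _ ↦ (withDensity_apply _ (hs i)).symm

theorem measurable_evariance_update {ι : Type*} [DecidableEq ι] {α : ι → Type*}
    [∀ i, MeasurableSpace (α i)] {i : ι} (ν : Measure (α i)) [SFinite ν]
    {f : (∀ i, α i) → ℝ} (hf : Measurable f) :
    Measurable fun x ↦ eVar[fun t ↦ f (update x i t); ν] :=
  measurable_evariance_prodMk_left (f := fun p : (∀ j, α j) × α i ↦ f (update p.1 i p.2))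
    (hf.comp measurable_update')

section Update

variable {ι : Type*} [Fintype ι] [DecidableEq ι] {α : ι → Type*} [∀ i, MeasurableSpace (α i)]

theorem measurePreserving_update (μ : ∀ i, Measure (α i)) [∀ i, IsProbabilityMeasure (μ i)]
    (i : ι) :
    MeasurePreserving (fun p : (∀ j, α j) × α i ↦ update p.1 i p.2)
      ((Measure.pi μ).prod (μ i)) (Measure.pi μ) := by
  have hmeas : Measurable fun p : (∀ j, α j) × α i ↦ update p.1 i p.2 := measurable_update'
  refine ⟨hmeas, (Measure.pi_eq fun s hs ↦ ?_).symm⟩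
  have hpre : (fun p : (∀ j, α j) × α i ↦ update p.1 i p.2) ⁻¹' univ.pi s =
      univ.pi (update s i univ) ×ˢ s i := by
    ext p
    simp only [mem_preimage, mem_univ_pi, mem_prod]
    rw [forall_update_iff p.1 fun j y ↦ y ∈ s j, and_comm]
    simp only [forall_update_iff s fun j t ↦ p.1 j ∈ t, mem_univ, true_and]
  rw [Measure.map_apply hmeas (MeasurableSet.univ_pi hs), hpre, Measure.prod_prod,
    Measure.pi_pi, ← Finset.prod_erase_mul _ _ (Finset.mem_univ i),
    ← Finset.prod_erase_mul _ _ (Finset.mem_univ i)]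
  simp only [update_self, measure_univ, mul_one]
  congr 1
  exact Finset.prod_congr rfl fun j hj ↦ by rw [update_of_ne (Finset.ne_of_mem_erase hj)]

theorem lintegral_lintegral_update (μ : ∀ i, Measure (α i)) [∀ i, IsProbabilityMeasure (μ i)]
    (i : ι) {f : (∀ i, α i) → ℝ≥0∞} (hf : Measurable f) :
    ∫⁻ x, ∫⁻ t, f (update x i t) ∂μ i ∂Measure.pi μ = ∫⁻ x, f x ∂Measure.pi μ := by
  have hupdate := measurePreserving_update μ i
  rw [← hupdate.lintegral_comp hf]
  exact (lintegral_prod _ (hf.comp hupdate.measurable).aemeasurable).symm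

end Update

theorem evariance_pi_le_sum {n : ℕ} {α : Fin n → Type*} [∀ i, MeasurableSpace (α i)]
    (μ : ∀ i, Measure (α i)) [∀ i, IsProbabilityMeasure (μ i)] {f : (∀ i, α i) → ℝ}
    (hf : Measurable f) :
    eVar[f; Measure.pi μ] ≤ ∑ i, ∫⁻ x, eVar[fun t ↦ f (update x i t); μ i] ∂Measure.pi μ := by
  induction n with
  | zero =>
    have hconst : f = fun _ ↦ f finZeroElim := funext fun x ↦ congrArg f (Subsingleton.elim x _)
    rw [hconst]
    simp [evariance]
  | succ n ih =>
    have hcons := measurePreserving_finCons μ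
    have hf_cons : Measurable fun p : α 0 × (∀ j : Fin n, α j.succ) ↦ f (Fin.cons p.1 p.2) :=
      hf.comp hcons.measurable
    have hmeas (i) := measurable_evariance_update (μ i) hf
    have htail (t : α 0) := ih (fun j ↦ μ j.succ) (hf_cons.comp (measurable_prodMk_left (x := t)))
    rw [← evariance_comp_of_measurePreserving hcons hf, Fin.sum_univ_succ]
    refine (evariance_prod_le hf_cons).trans (add_le_add ?_ ?_)
    · rw [lintegral_pi_finSucc μ (hmeas 0)]
      simp [Fin.update_cons_zero]
    · simp only [lintegral_pi_finSucc μ (hmeas _)]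
      rw [← lintegral_finsetSum]
      · simpa only [comp_def, Fin.cons_update] using lintegral_mono htail
      · exact fun j _ ↦ ((hmeas j.succ).comp hcons.measurable).lintegral_prod_right'

end Product

section SteinWeight

theorem enorm_sub_sq_le_mul_lintegral_deriv_sq {f : ℝ → ℝ} (hf : ContDiff ℝ 1 f) {x y : ℝ}
    (hxy : x ≤ y) :
    ‖f y - f x‖ₑ ^ 2 ≤ ENNReal.ofReal (y - x) * ∫⁻ t in Ioc x y, ‖deriv f t‖ₑ ^ 2 := by
  have hderiv : Continuous (deriv f) := hf.continuous_deriv_one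
  have hFTC : ∫ t in Ioc x y, deriv f t = f y - f x := by
    rw [← intervalIntegral.integral_of_le hxy]
    exact intervalIntegral.integral_deriv_eq_sub
      (fun t _ ↦ hf.differentiable one_ne_zero t) (hderiv.intervalIntegrable _ _)
  simpa [hFTC] using enorm_integral_sq_le (μ := volume.restrict (Ioc x y)) (f := deriv f)
    hderiv.aestronglyMeasurable

theorem enorm_sub_sq_le_add_lintegral_deriv_sq {f : ℝ → ℝ} (hf : ContDiff ℝ 1 f) (x y : ℝ) :
    ‖f x - f y‖ₑ ^ 2 ≤ ENNReal.ofReal (y - x) * (∫⁻ t in Ioc x y, ‖deriv f t‖ₑ ^ 2) +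
      ENNReal.ofReal (x - y) * ∫⁻ t in Ioc y x, ‖deriv f t‖ₑ ^ 2 := by
  rcases le_total x y with hxy | hyx
  · rw [enorm_sub_rev]
    exact (enorm_sub_sq_le_mul_lintegral_deriv_sq hf hxy).trans le_self_add
  · exact (enorm_sub_sq_le_mul_lintegral_deriv_sq hf hyx).trans le_add_self

/-- The Stein kernel of `μ` multiplied by the density of `μ`: for `μ` with mean `m` it is
`t ↦ ∫ y in Ici t, (y - m) ∂μ`. The definition as a double integral needs no moment of `μ`. -/
def steinWeight (μ : Measure ℝ) (t : ℝ) : ℝ≥0∞ :=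
  ∫⁻ p in Iio t ×ˢ Ici t, ENNReal.ofReal (p.2 - p.1) ∂μ.prod μ

theorem measurable_indicator_Ioc_fst_snd {g : ℝ → ℝ≥0∞} (hg : Measurable g) :
    Measurable fun q : (ℝ × ℝ) × ℝ ↦ (Ioc q.1.1 q.1.2).indicator g q.2 := by
  have hlt : MeasurableSet {q : (ℝ × ℝ) × ℝ | q.1.1 < q.2} :=
    measurableSet_lt (by fun_prop) (by fun_prop)
  have hle : MeasurableSet {q : (ℝ × ℝ) × ℝ | q.2 ≤ q.1.2} :=
    measurableSet_le (by fun_prop) (by fun_prop)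
  exact (hg.comp measurable_snd).indicator (hlt.inter hle)

theorem measurable_lintegral_Ioc {g : ℝ → ℝ≥0∞} (hg : Measurable g) :
    Measurable fun p : ℝ × ℝ ↦ ∫⁻ t in Ioc p.1 p.2, g t := by
  simp_rw [← lintegral_indicator measurableSet_Ioc]
  exact (measurable_indicator_Ioc_fst_snd hg).lintegral_prod_right'

theorem lintegral_prod_mul_lintegral_Ioc (μ : Measure ℝ) [SFinite μ] {g : ℝ → ℝ≥0∞}
    (hg : Measurable g) :
    ∫⁻ p, ENNReal.ofReal (p.2 - p.1) * (∫⁻ t in Ioc p.1 p.2, g t) ∂μ.prod μ =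
      ∫⁻ t, g t * steinWeight μ t := by
  have hind := measurable_indicator_Ioc_fst_snd hg
  have hinner (p : ℝ × ℝ) : ENNReal.ofReal (p.2 - p.1) * (∫⁻ t in Ioc p.1 p.2, g t) =
      ∫⁻ t, ENNReal.ofReal (p.2 - p.1) * (Ioc p.1 p.2).indicator g t := by
    rw [lintegral_const_mul _ (hg.indicator measurableSet_Ioc),
      lintegral_indicator measurableSet_Ioc]
  have houter (t : ℝ) : g t * steinWeight μ t =
      ∫⁻ p, ENNReal.ofReal (p.2 - p.1) * (Ioc p.1 p.2).indicator g t ∂μ.prod μ := by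
    rw [steinWeight, ← lintegral_const_mul _ (by fun_prop),
      ← lintegral_indicator (measurableSet_Iio.prod measurableSet_Ici)]
    exact lintegral_congr fun p ↦ by simp [indicator_apply, mul_comm]
  simp_rw [hinner, houter]
  exact lintegral_lintegral_swap (by unfold uncurry; fun_prop)

theorem evariance_le_lintegral_deriv_sq_mul_steinWeight (μ : Measure ℝ) [IsProbabilityMeasure μ]
    {f : ℝ → ℝ} (hf : ContDiff ℝ 1 f) :
    eVar[f; μ] ≤ ∫⁻ t, ‖deriv f t‖ₑ ^ 2 * steinWeight μ t := by
  have := hf.continuous_deriv_one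
  have hmeas : Measurable fun p : ℝ × ℝ ↦
      ENNReal.ofReal (p.2 - p.1) * ∫⁻ t in Ioc p.1 p.2, ‖deriv f t‖ₑ ^ 2 :=
    Measurable.mul (by fun_prop) (measurable_lintegral_Ioc (by fun_prop))
  rw [← lintegral_prod_mul_lintegral_Ioc μ (by fun_prop),
    ← ENNReal.mul_le_mul_iff_right two_ne_zero ENNReal.ofNat_ne_top,
    ← lintegral_prod_enorm_sub_sq hf.continuous.measurable, two_mul]
  nth_rw 3 [← lintegral_prod_swap]
  rw [← lintegral_add_left hmeas]
  exact lintegral_mono fun p ↦ enorm_sub_sq_le_add_lintegral_deriv_sq hf p.1 p.2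

theorem steinWeight_eq_ofReal_setIntegral (μ : Measure ℝ) [IsProbabilityMeasure μ]
    (hμ : Integrable (fun y ↦ y) μ) (t : ℝ) :
    steinWeight μ t = ENNReal.ofReal (∫ y in Ici t, (y - ∫ x, x ∂μ) ∂μ) := by
  have hdiff : Integrable (fun p : ℝ × ℝ ↦ p.2 - p.1) (μ.prod μ) :=
    (hμ.comp_snd μ).sub (hμ.comp_fst μ)
  have hpos : 0 ≤ᵐ[(μ.prod μ).restrict (Iio t ×ˢ Ici t)] fun p : ℝ × ℝ ↦ p.2 - p.1 := by
    filter_upwards [ae_restrict_mem (measurableSet_Iio.prod measurableSet_Ici)] with p hp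
    exact sub_nonneg.2 (hp.1.le.trans hp.2)
  rw [steinWeight, ← ofReal_integral_eq_lintegral_ofReal hdiff.restrict hpos]
  congr 1
  have hsplit : ∫ y in Iio t, y ∂μ = ∫ y, y ∂μ - ∫ y in Ici t, y ∂μ := by
    rw [← integral_add_compl measurableSet_Ici hμ, compl_Ici, add_sub_cancel_left]
  have hmass : μ.real (Iio t) = 1 - μ.real (Ici t) := by
    rw [← probReal_compl_eq_one_sub measurableSet_Ici, compl_Ici]
  calc ∫ p in Iio t ×ˢ Ici t, (p.2 - p.1) ∂μ.prod μ
      = μ.real (Iio t) * (∫ y in Ici t, y ∂μ) - μ.real (Ici t) * ∫ y in Iio t, y ∂μ := by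
        rw [← Measure.prod_restrict, integral_sub (hμ.restrict.comp_snd _) (hμ.restrict.comp_fst _),
          integral_fun_snd fun y : ℝ ↦ y, integral_fun_fst fun y : ℝ ↦ y]
        simp
    _ = (∫ y in Ici t, y ∂μ) - μ.real (Ici t) * ∫ y, y ∂μ := by
        rw [hsplit, hmass]
        ring
    _ = ∫ y in Ici t, (y - ∫ x, x ∂μ) ∂μ := by
        rw [integral_sub hμ.restrict (integrable_const _)]
        simp

end SteinWeight

section Gaussian

theorem hasDerivAt_gaussianPDFReal (m : ℝ) (v : ℝ≥0) (x : ℝ) :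
    HasDerivAt (gaussianPDFReal m v) (-(x - m) / v * gaussianPDFReal m v x) x := by
  have hexponent : HasDerivAt (fun x : ℝ ↦ -(x - m) ^ 2 / (2 * v)) (-(x - m) / v) x := by
    convert! (((hasDerivAt_id x).sub_const m).pow 2).neg.div_const (2 * v : ℝ) using 1
    simp only [id_eq, Nat.cast_ofNat, Nat.add_one_sub_one, pow_one, mul_one, ← mul_neg]
    exact (mul_div_mul_left _ _ two_ne_zero).symm
  convert! hexponent.exp.const_mul (√(2 * Real.pi * v))⁻¹ using 1
  rw [gaussianPDFReal]
  ring

theorem setIntegral_Ici_sub_mean_gaussianReal (m : ℝ) {v : ℝ≥0} (hv : v ≠ 0) (t : ℝ) :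
    ∫ y in Ici t, (y - m) ∂gaussianReal m v = v * gaussianPDFReal m v t := by
  have hfinite : ∀ᵐ y, gaussianPDF m v y < ∞ := ae_of_all _ fun _ ↦ gaussianPDF_lt_top
  have hderiv (y : ℝ) : HasDerivAt (fun y ↦ -(v * gaussianPDFReal m v y))
      (gaussianPDFReal m v y * (y - m)) y := by
    convert! ((hasDerivAt_gaussianPDFReal m v y).const_mul (v : ℝ)).neg using 1
    field_simp [NNReal.coe_ne_zero.2 hv]
  have hint : Integrable fun y ↦ gaussianPDFReal m v y * (y - m) := by
    have hsub : Integrable (fun y ↦ y - m) (gaussianReal m v) :=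
      ((memLp_id_gaussianReal 1).integrable le_rfl).sub (integrable_const m)
    rw [gaussianReal_of_var_ne_zero m hv,
      integrable_withDensity_iff_integrable_smul' (measurable_gaussianPDF m v) hfinite] at hsub
    simpa only [toReal_gaussianPDF, smul_eq_mul] using hsub
  have hlim : Tendsto (fun y ↦ -(v * gaussianPDFReal m v y)) atTop (𝓝 0) :=
    tendsto_zero_of_hasDerivAt_of_integrableOn_Ioi (a := t) (fun y _ ↦ hderiv y) hint.integrableOn
      ((integrable_gaussianPDFReal m v).const_mul _).neg.integrableOn
  rw [gaussianReal_of_var_ne_zero m hv, setIntegral_withDensity_eq_setIntegral_toReal_smul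
    (measurable_gaussianPDF m v) (ae_restrict_of_ae hfinite) _ measurableSet_Ici,
    integral_Ici_eq_integral_Ioi]
  simp only [toReal_gaussianPDF, smul_eq_mul]
  rw [integral_Ioi_of_hasDerivAt_of_tendsto' (fun y _ ↦ hderiv y) hint.integrableOn hlim]
  ring

theorem steinWeight_gaussianReal (m : ℝ) {v : ℝ≥0} (hv : v ≠ 0) (t : ℝ) :
    steinWeight (gaussianReal m v) t = v * gaussianPDF m v t := by
  rw [steinWeight_eq_ofReal_setIntegral _ ((memLp_id_gaussianReal 1).integrable le_rfl),
    integral_id_gaussianReal, setIntegral_Ici_sub_mean_gaussianReal m hv,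
    ENNReal.ofReal_mul v.coe_nonneg, ENNReal.ofReal_coe_nnreal, gaussianPDF]

theorem evariance_gaussianReal_le (m : ℝ) (v : ℝ≥0) {f : ℝ → ℝ} (hf : ContDiff ℝ 1 f) :
    eVar[f; gaussianReal m v] ≤ v * ∫⁻ t, ‖deriv f t‖ₑ ^ 2 ∂gaussianReal m v := by
  have := hf.continuous_deriv_one
  rcases eq_or_ne v 0 with rfl | hv
  · simp [evariance]
  · rw [gaussianReal_of_var_ne_zero m hv,
      lintegral_withDensity_eq_lintegral_mul _ (measurable_gaussianPDF m v) (by fun_prop),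
      ← lintegral_const_mul _ (by fun_prop), ← gaussianReal_of_var_ne_zero m hv]
    refine (evariance_le_lintegral_deriv_sq_mul_steinWeight _ hf).trans_eq
      (lintegral_congr fun t ↦ ?_)
    rw [steinWeight_gaussianReal m hv, Pi.mul_apply]
    ring

end Gaussian

section GaussianPi

theorem hasDerivAt_comp_update {ι : Type*} [Finite ι] [DecidableEq ι] {f : (ι → ℝ) → ℝ}
    {x : ι → ℝ} {i : ι} {t : ℝ} (hf : DifferentiableAt ℝ f (update x i t)) :
    HasDerivAt (fun s ↦ f (update x i s)) (fderiv ℝ f (update x i t) (Pi.single i 1)) t := by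
  have := Fintype.ofFinite ι
  exact hf.hasFDerivAt.comp_hasDerivAt t (hasDerivAt_update x i t)

theorem evariance_pi_gaussianReal_le {n : ℕ} (m : Fin n → ℝ) (v : Fin n → ℝ≥0)
    {f : (Fin n → ℝ) → ℝ} (hf : ContDiff ℝ 1 f) :
    eVar[f; Measure.pi fun i ↦ gaussianReal (m i) (v i)] ≤
      ∑ i, v i * ∫⁻ x, ‖fderiv ℝ f x (Pi.single i 1)‖ₑ ^ 2
        ∂Measure.pi fun i ↦ gaussianReal (m i) (v i) := by
  have hdiff : Differentiable ℝ f := hf.differentiable one_ne_zero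
  have hslice (x : Fin n → ℝ) (i : Fin n) : ContDiff ℝ 1 fun t ↦ f (update x i t) :=
    hf.comp (contDiff_update 1 x i)
  have hpartial (i : Fin n) :
      Measurable fun x ↦ ‖fderiv ℝ f x (Pi.single i 1)‖ₑ ^ 2 := by
    have := hf.continuous_fderiv one_ne_zero
    fun_prop
  refine (evariance_pi_le_sum _ hf.continuous.measurable).trans (Finset.sum_le_sum fun i _ ↦ ?_)
  calc ∫⁻ x, eVar[fun t ↦ f (update x i t); gaussianReal (m i) (v i)]
        ∂(Measure.pi fun i ↦ gaussianReal (m i) (v i))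
      ≤ ∫⁻ x, v i * ∫⁻ t, ‖fderiv ℝ f (update x i t) (Pi.single i 1)‖ₑ ^ 2
          ∂gaussianReal (m i) (v i) ∂(Measure.pi fun i ↦ gaussianReal (m i) (v i)) := by
        refine lintegral_mono fun x ↦ ?_
        simpa only [(hasDerivAt_comp_update (hdiff _)).deriv] using
          evariance_gaussianReal_le (m i) (v i) (hslice x i)
    _ = v i * ∫⁻ x, ‖fderiv ℝ f x (Pi.single i 1)‖ₑ ^ 2
          ∂Measure.pi fun i ↦ gaussianReal (m i) (v i) := by
        rw [lintegral_const_mul' _ _ ENNReal.coe_ne_top,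
          lintegral_lintegral_update (fun i ↦ gaussianReal (m i) (v i)) i (hpartial i)]

end GaussianPi

section Euclidean

variable {n : ℕ}

theorem prod_gaussianPDFReal_zero_one (x : EuclideanSpace ℝ (Fin n)) :
    ∏ i, gaussianPDFReal 0 1 (x i) =
      (2 * Real.pi) ^ (-(n : ℝ) / 2) * Real.exp (-‖x‖ ^ 2 / 2) := by
  have hpi : 0 ≤ 2 * Real.pi := by positivity
  have hconst : (√(2 * Real.pi))⁻¹ ^ n = (2 * Real.pi) ^ (-(n : ℝ) / 2) := by
    rw [Real.sqrt_eq_rpow, ← Real.rpow_neg hpi, ← Real.rpow_natCast, ← Real.rpow_mul hpi]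
    ring_nf
  simp only [gaussianPDFReal, NNReal.coe_one, mul_one, sub_zero, Finset.prod_mul_distrib,
    Finset.prod_const, Finset.card_univ, Fintype.card_fin, hconst, ← Real.exp_sum,
    EuclideanSpace.norm_sq_eq, Real.norm_eq_abs, sq_abs, ← Finset.sum_div, Finset.sum_neg_distrib]

theorem measurePreserving_toLp_stdGaussian :
    MeasurePreserving (WithLp.toLp 2) (Measure.pi fun _ : Fin n ↦ gaussianReal 0 1)
      (stdGaussian n) := by
  have hpi : Measure.pi (fun _ : Fin n ↦ gaussianReal 0 1) =
      volume.withDensity fun x ↦ ENNReal.ofReal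
        ((2 * Real.pi) ^ (-(n : ℝ) / 2) * Real.exp (-‖WithLp.toLp 2 x‖ ^ 2 / 2)) := by
    simp_rw [gaussianReal_of_var_ne_zero 0 one_ne_zero]
    have : IsProbabilityMeasure (volume.withDensity (gaussianPDF 0 1)) :=
      gaussianReal_of_var_ne_zero 0 one_ne_zero ▸ inferInstance
    rw [pi_withDensity _ fun _ ↦ measurable_gaussianPDF 0 1, volume_pi]
    simp_rw [← prod_gaussianPDFReal_zero_one, gaussianPDF]
    simp_rw [ENNReal.ofReal_prod_of_nonneg fun _ _ ↦ gaussianPDFReal_nonneg _ _ _]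
  refine ⟨by fun_prop, Measure.ext fun s hs ↦ ?_⟩
  rw [Measure.map_apply (by fun_prop) hs, hpi, stdGaussian, withDensity_apply _ hs,
    withDensity_apply _ (hs.preimage (by fun_prop)),
    ← (PiLp.volume_preserving_toLp (Fin n)).setLIntegral_comp_preimage hs (by fun_prop)]

instance isProbabilityMeasure_stdGaussian : IsProbabilityMeasure (stdGaussian n) :=
  measurePreserving_toLp_stdGaussian.map_eq ▸
    Measure.isProbabilityMeasure_map measurePreserving_toLp_stdGaussian.aemeasurable

theorem enorm_gradient_sq_eq_sum {ψ : EuclideanSpace ℝ (Fin n) → ℝ} {x : Fin n → ℝ}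
    (hψ : DifferentiableAt ℝ ψ (WithLp.toLp 2 x)) :
    ‖gradient ψ (WithLp.toLp 2 x)‖ₑ ^ 2 =
      ∑ i, ‖fderiv ℝ (fun y ↦ ψ (WithLp.toLp 2 y)) x (Pi.single i 1)‖ₑ ^ 2 := by
  have hchain := hψ.hasFDerivAt.comp x (PiLp.hasFDerivAt_toLp (𝕜 := ℝ) 2 x)
  have hinner (i : Fin n) : inner ℝ (EuclideanSpace.single i 1) (gradient ψ (WithLp.toLp 2 x)) =
      fderiv ℝ (fun y ↦ ψ (WithLp.toLp 2 y)) x (Pi.single i 1) := by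
    rw [real_inner_comm, gradient, InnerProductSpace.toDual_symm_apply]
    exact (DFunLike.congr_fun hchain.fderiv (Pi.single i 1)).symm
  have hsum := (EuclideanSpace.basisFun (Fin n) ℝ).sum_sq_norm_inner_right
    (gradient ψ (WithLp.toLp 2 x))
  simp only [EuclideanSpace.basisFun_apply, hinner] at hsum
  simp only [← ofReal_norm, ← ENNReal.ofReal_pow (norm_nonneg _)]
  rw [← hsum, ENNReal.ofReal_sum_of_nonneg fun _ _ ↦ sq_nonneg _]

theorem evariance_stdGaussian_le {ψ : EuclideanSpace ℝ (Fin n) → ℝ} (hψ : ContDiff ℝ 1 ψ) :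
    eVar[ψ; stdGaussian n] ≤ ∫⁻ x, ‖gradient ψ x‖ₑ ^ 2 ∂stdGaussian n := by
  have hf : ContDiff ℝ 1 fun y : Fin n → ℝ ↦ ψ (WithLp.toLp 2 y) := hψ.comp PiLp.contDiff_toLp
  have hdiff : Differentiable ℝ ψ := hψ.differentiable one_ne_zero
  have hpartial (i : Fin n) : Measurable fun x ↦
      ‖fderiv ℝ (fun y : Fin n → ℝ ↦ ψ (WithLp.toLp 2 y)) x (Pi.single i 1)‖ₑ ^ 2 := by
    have := hf.continuous_fderiv one_ne_zero
    fun_prop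
  have hgrad : Measurable fun x ↦ ‖gradient ψ x‖ₑ ^ 2 := by
    have : Continuous (gradient ψ) :=
      (InnerProductSpace.toDual ℝ _).symm.continuous.comp (hψ.continuous_fderiv one_ne_zero)
    fun_prop
  rw [← evariance_comp_of_measurePreserving measurePreserving_toLp_stdGaussian
      hψ.continuous.measurable, ← measurePreserving_toLp_stdGaussian.lintegral_comp hgrad]
  simp_rw [enorm_gradient_sq_eq_sum (hdiff _)]
  rw [lintegral_finsetSum _ fun i _ ↦ hpartial i]
  simpa using evariance_pi_gaussianReal_le (fun _ ↦ 0) (fun _ ↦ 1) hf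

end Euclidean

theorem stmt_18_general {n : ℕ} {ψ : EuclideanSpace ℝ (Fin n) → ℝ} (hψ : ContDiff ℝ 1 ψ)
    (hgrad : Integrable (fun x ↦ ‖gradient ψ x‖ ^ 2) (stdGaussian n)) :
    MemLp ψ 2 (stdGaussian n) ∧
      (∫ x, ψ x ^ 2 ∂stdGaussian n) - (∫ x, ψ x ∂stdGaussian n) ^ 2 ≤
        ∫ x, ‖gradient ψ x‖ ^ 2 ∂stdGaussian n := by
  have hle : eVar[ψ; stdGaussian n] ≤
      ENNReal.ofReal (∫ x, ‖gradient ψ x‖ ^ 2 ∂stdGaussian n) := by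
    rw [ofReal_integral_eq_lintegral_ofReal hgrad (ae_of_all _ fun x ↦ sq_nonneg _)]
    simpa [ENNReal.ofReal_pow] using evariance_stdGaussian_le hψ
  have hLp : MemLp ψ 2 (stdGaussian n) :=
    (evariance_lt_top_iff_memLp hψ.continuous.aestronglyMeasurable).1
      (hle.trans_lt ENNReal.ofReal_lt_top)
  refine ⟨hLp, ?_⟩
  rw [← hLp.ofReal_variance_eq, ENNReal.ofReal_le_ofReal_iff
    (integral_nonneg fun x ↦ sq_nonneg _), variance_eq_sub hLp] at hle
  exact hle

end GaussianPoincare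

theorem stmt_18 {n : ℕ} (hn : 1 ≤ n)
    (ψ : EuclideanSpace ℝ (Fin n) → ℝ) (hsmooth : ContDiff ℝ (⊤ : ℕ∞) ψ)
    (h1 : Integrable ψ (stdGaussian n))
    (h2 : Integrable (fun x => ψ x ^ 2) (stdGaussian n))
    (h3 : Integrable (fun x => ‖gradient ψ x‖ ^ 2) (stdGaussian n)) :
    (∫ x, ψ x ^ 2 ∂stdGaussian n) - (∫ x, ψ x ∂stdGaussian n) ^ 2 ≤
      ∫ x, ‖gradient ψ x‖ ^ 2 ∂stdGaussian n :=
  (stmt_18_general (hsmooth.of_le (by exact_mod_cast le_top)) h3).2
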